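/- arXiv:1509.00776 — 9 statements merged into one kernel-verified Lean document; each statement's English description precedes it below -/
import Mathlib

section
/- Let α ∈ (0,1). If the root c₁ = 1/2 + √(12/α − 3)/6 of the quadratic 3αx² − 3αx + (α − 1) is a rational number, then there exist integers p > q ≥ 1 such that α = q²/(3p(p − q) + q²). -/
/-- The larger root `c₁ = 1/2 + √(12/α − 3)/6` of `3αx² − 3αx + (α − 1)`. -/
noncomputable def c1 (α : ℝ) : ℝ := 1/2 + Real.sqrt (12/α - 3)/6

/-- If `α ∈ (0,1)` and the root `c₁` is rational, then
`α = q²/(3p(p − q) + q²)` for some integers `p > q ≥ 1`. -/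
theorem alpha_form_of_c1_rational (α : ℝ) (hα : α ∈ Set.Ioo (0:ℝ) 1)
    (h : ∃ r : ℚ, (r : ℝ) = c1 α) :
    ∃ p q : ℤ, p > q ∧ 1 ≤ q ∧
      α = (q : ℝ)^2 / (3 * (p : ℝ) * ((p : ℝ) - (q : ℝ)) + (q : ℝ)^2) := by
  obtain ⟨h0, h1⟩ := hα
  obtain ⟨r, hr⟩ := h
  unfold c1 at hr
  have h12 : 12 < 12 / α := by
    rw [lt_div_iff₀ h0]; linarith
  have hs := Real.sq_sqrt (show (0:ℝ) ≤ 12/α - 3 by linarith)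
  have hs3 : 3 < Real.sqrt (12/α - 3) := by
    apply Real.lt_sqrt_of_sq_lt; linarith
  have hr1 : (1:ℝ) < r := by linarith
  have hsr : Real.sqrt (12/α - 3) = 6 * (r:ℝ) - 3 := by linarith
  rw [hsr] at hs
  have hq : (0:ℝ) < (r.den : ℝ) := by exact_mod_cast r.den_pos
  have hrd : (r:ℝ) * r.den = r.num := by exact_mod_cast Rat.mul_den_eq_num r
  have hα : α * (3 * (r:ℝ) * (r - 1) + 1) = 1 := by
    have : 12 / α * α = 12 := by field_simp
    linear_combination (α / 12) * hs + this / 12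
  refine ⟨r.num, (r.den : ℤ), ?_, ?_, ?_⟩
  · have : (r.den : ℝ) < r.num := by rw [← hrd]; nlinarith
    exact_mod_cast this
  · exact_mod_cast r.den_pos
  · push_cast
    rw [← hrd, eq_div_iff]
    · linear_combination (r.den : ℝ)^2 * hα
    · have : 0 < (r:ℝ) * ((r:ℝ) - 1) := mul_pos (by linarith) (by linarith)
      have h2 : 3 * ((r:ℝ) * r.den) * ((r:ℝ) * r.den - r.den) + (r.den:ℝ)^2
          = (r.den:ℝ)^2 * (3 * ((r:ℝ) * ((r:ℝ) - 1)) + 1) := by ring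
      rw [h2]
      positivity
end

section
/- For all integers p > q ≥ 1, every integer k ≥ 0, and every integer ℓ not divisible by 3, one has q²/(3p(p − q) + q²) ≠ ℓ/3^k. In other words, no rational number of the form ℓ/3^k with 3 ∤ ℓ can be written as q²/(3p(p − q) + q²) with integers p > q ≥ 1. -/
theorem alpha_form_aux (ℓ : ℤ) (hℓ : ¬ (3 ∣ ℓ)) (k : ℕ) (n : ℕ) : ∀ p q : ℤ, 1 ≤ q →
    q.toNat ≤ n → q ^ 2 * 3 ^ (k + 1) ≠ ℓ * (3 * p * (p - q) + q ^ 2) := by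
  have h3 : Prime (3 : ℤ) := Int.prime_three
  induction n with
  | zero => intro p q hq hn; omega
  | succ n ih =>
    intro p q hq hn h
    have hD : (3 : ℤ) ∣ ℓ * (3 * p * (p - q) + q ^ 2) := by
      rw [← h]; exact ⟨q ^ 2 * 3 ^ k, by ring⟩
    have hD' := (h3.dvd_or_dvd hD).resolve_left hℓ
    have hq2 : (3 : ℤ) ∣ q ^ 2 :=
      (dvd_add_right (⟨p * (p - q), by ring⟩ : (3 : ℤ) ∣ 3 * p * (p - q))).1 hD'
    obtain ⟨r, rfl⟩ := h3.dvd_of_dvd_pow hq2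
    have h1 : 3 * (r ^ 2 * 3 ^ (k + 1)) = ℓ * (p ^ 2 - 3 * p * r + 3 * r ^ 2) := by
      linarith
    have hE := (h3.dvd_or_dvd (⟨_, h1.symm⟩ :
      (3 : ℤ) ∣ ℓ * (p ^ 2 - 3 * p * r + 3 * r ^ 2))).resolve_left hℓ
    have hp2 : (3 : ℤ) ∣ p ^ 2 := by
      obtain ⟨c, hc⟩ := hE
      exact ⟨c + p * r - r ^ 2, by linarith⟩
    obtain ⟨s, rfl⟩ := h3.dvd_of_dvd_pow hp2
    exact ih s r (by omega) (by omega) (by linarith)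

/-- For all integers `p > q ≥ 1`, every integer `k ≥ 0`, and every integer `ℓ` not
divisible by `3`, one has `q²/(3p(p − q) + q²) ≠ ℓ/3^k` (as rational numbers). -/
theorem alpha_form_ne_ell_div_three_pow (p q k ℓ : ℤ)
    (hpq : p > q) (hq : 1 ≤ q) (hk : 0 ≤ k) (hℓ : ¬ (3 ∣ ℓ)) :
    (q : ℚ)^2 / (3 * (p : ℚ) * ((p : ℚ) - (q : ℚ)) + (q : ℚ)^2) ≠ (ℓ : ℚ) / (3 : ℚ)^k := by
  intro h
  have hpos : 0 < 3 * p * (p - q) := mul_pos (by linarith) (by linarith)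
  have hq2 : 0 < q ^ 2 := by positivity
  obtain ⟨m, rfl⟩ := Int.eq_ofNat_of_zero_le hk
  have hD : (3 * (p : ℚ) * ((p : ℚ) - (q : ℚ)) + (q : ℚ)^2) ≠ 0 := by
    have : 3 * p * (p - q) + q ^ 2 ≠ 0 := by linarith
    exact_mod_cast this
  rw [zpow_natCast, div_eq_div_iff hD (by positivity)] at h
  have h' : q ^ 2 * 3 ^ m = ℓ * (3 * p * (p - q) + q ^ 2) := by exact_mod_cast h
  cases m with
  | succ m => exact alpha_form_aux ℓ hℓ m q.toNat p q hq le_rfl h'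
  | zero =>
    rw [pow_zero, mul_one] at h'
    have hl : 0 < ℓ := by
      by_contra hc
      nlinarith
    nlinarith
end

section
/- The set { q²/(3p(p − q) + q²) : p, q ∈ ℤ, p > q ≥ 1 } is dense in the interval [0, 1]. -/
/-- The set `{ q²/(3p(p − q) + q²) : p, q ∈ ℤ, p > q ≥ 1 }` is dense in `[0, 1]`. -/
theorem alpha_form_dense_in_unit_interval :
    Set.Icc (0 : ℝ) 1 ⊆
      closure {x : ℝ | ∃ p q : ℤ, p > q ∧ 1 ≤ q ∧
        x = (q : ℝ)^2 / (3 * (p : ℝ) * ((p : ℝ) - (q : ℝ)) + (q : ℝ)^2)} := by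
  have hpos : ∀ t : ℝ, 0 < 3 * (1 - t) + t ^ 2 := fun t => by
    nlinarith [sq_nonneg (2 * t - 3)]
  let f : ℝ → ℝ := fun t => t ^ 2 / (3 * (1 - t) + t ^ 2)
  have hf : Continuous f :=
    Continuous.div (by fun_prop) (by fun_prop) (fun t => (hpos t).ne')
  intro x hx
  have hx' : x ∈ Set.Icc (f 0) (f 1) := by simpa [f] using hx
  obtain ⟨t, ht, rfl⟩ := intermediate_value_Icc (zero_le_one' ℝ) hf.continuousOn hx'
  have hd : Dense (Set.range ((↑) : ℚ → ℝ)) := Rat.denseRange_cast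
  have htc : t ∈ closure (Set.Ioo (0 : ℝ) 1 ∩ Set.range ((↑) : ℚ → ℝ)) := by
    have h := closure_minimal (hd.open_subset_closure_inter (isOpen_Ioo (a := (0 : ℝ)) (b := 1)))
      isClosed_closure
    rw [closure_Ioo (zero_ne_one' ℝ)] at h
    exact h ht
  refine map_mem_closure hf htc ?_
  rintro _ ⟨⟨h0, h1⟩, r, rfl⟩
  have hr0 : 0 < r := by exact_mod_cast h0
  have hr1 : r < 1 := by exact_mod_cast h1
  have hden : (0 : ℝ) < (r.den : ℝ) := by exact_mod_cast r.den_pos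
  have hr : (r : ℝ) = (r.num : ℝ) / (r.den : ℝ) := Rat.cast_def r
  refine ⟨(r.den : ℤ), r.num, ?_, ?_, ?_⟩
  · rw [hr, div_lt_one hden] at h1
    exact_mod_cast h1
  · have := Rat.num_pos.2 hr0
    omega
  · have hn : (r.num : ℝ) = (r : ℝ) * (r.den : ℝ) := by
      rw [hr]; field_simp
    rw [Int.cast_natCast, hn]
    have e : 3 * (r.den : ℝ) * ((r.den : ℝ) - (r : ℝ) * (r.den : ℝ)) + ((r : ℝ) * (r.den : ℝ)) ^ 2
        = (3 * (1 - (r : ℝ)) + (r : ℝ) ^ 2) * (r.den : ℝ) ^ 2 := by ring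
    rw [e, mul_pow, mul_div_mul_right _ _ (pow_pos hden 2).ne']
end

section
/- If β ≥ γ > 1, then there exists a constant C = C(β, γ) > 0 such that for all real numbers k₁ and k₂, Σ_{n ∈ ℤ} ⟨n − k₁⟩^{−β} ⟨n − k₂⟩^{−γ} ≤ C ⟨k₁ − k₂⟩^{−γ}. -/
/-- The Japanese bracket `⟨x⟩ = (1 + x²)^{1/2}`. -/
noncomputable def jb (x : ℝ) : ℝ := Real.sqrt (1 + x^2)

lemma le_sqr_aux {a b : ℝ} (h : a ^ 2 ≤ b ^ 2) (hb : 0 ≤ b) : a ≤ b := by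
  exact (le_abs_self a).trans (abs_le_of_sq_le_sq h hb)

lemma jb_one_le (x : ℝ) : 1 ≤ jb x := by
  unfold jb
  rw [Real.one_le_sqrt]
  nlinarith [sq_nonneg x]

lemma jb_pos (x : ℝ) : 0 < jb x := lt_of_lt_of_le one_pos (jb_one_le x)

lemma jb_sq (x : ℝ) : jb x ^ 2 = 1 + x ^ 2 := by
  unfold jb
  exact Real.sq_sqrt (by positivity)

lemma abs_le_jb (x : ℝ) : |x| ≤ jb x := by
  unfold jb
  apply Real.abs_le_sqrt
  linarith

lemma jb_le_two_mul_of_sq {x y : ℝ} (h : 1 + x ^ 2 ≤ 4 * (1 + y ^ 2)) : jb x ≤ 2 * jb y := by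
  refine le_sqr_aux ?_ (by linarith [jb_pos y])
  rw [mul_pow, jb_sq, jb_sq]
  linarith

/-- Antitonicity of the negative power, with a loss of a factor two. -/
lemma rpow_neg_le {γ d a : ℝ} (hγ : 1 < γ) (hd : 0 < d) (h : d ≤ 2 * a) :
    a ^ (-γ) ≤ 2 ^ γ * d ^ (-γ) := by
  have h1 : a ^ (-γ) ≤ (d / 2) ^ (-γ) :=
    Real.rpow_le_rpow_of_nonpos (by linarith) (by linarith) (by linarith)
  have h2 : (d / 2) ^ (-γ) = 2 ^ γ * d ^ (-γ) := by
    rw [Real.div_rpow hd.le (by norm_num), Real.rpow_neg (by norm_num : (0:ℝ) ≤ 2)]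
    rw [div_inv_eq_mul, mul_comm]
  linarith

lemma summable_jb {γ : ℝ} (hγ : 1 < γ) : Summable (fun n : ℤ => jb (n : ℝ) ^ (-γ)) := by
  apply Summable.of_norm_bounded_eventually (Real.summable_abs_int_rpow hγ)
  filter_upwards [(Set.finite_singleton (0 : ℤ)).compl_mem_cofinite] with n hn
  have hn' : n ≠ 0 := by simpa using hn
  rw [Real.norm_of_nonneg (Real.rpow_nonneg (jb_pos _).le _)]
  apply Real.rpow_le_rpow_of_nonpos _ (abs_le_jb _) (by linarith)
  rw [abs_pos]
  exact_mod_cast hn'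

lemma jb_shift_bound {γ : ℝ} (hγ : 1 < γ) (k : ℝ) (m : ℤ) :
    jb (((m + ⌊k⌋ : ℤ) : ℝ) - k) ^ (-γ) ≤ 2 ^ γ * jb (m : ℝ) ^ (-γ) := by
  apply rpow_neg_le hγ (jb_pos _)
  apply jb_le_two_mul_of_sq
  have h0 := Int.fract_nonneg k
  have h1 := Int.fract_lt_one k
  have h2 : (((m + ⌊k⌋ : ℤ) : ℝ) - k) = m - Int.fract k := by
    rw [Int.fract]; push_cast; ring
  rw [h2]
  set f := Int.fract k
  nlinarith [sq_nonneg ((m : ℝ) - 2 * f)]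

lemma jb_uniform {γ : ℝ} (hγ : 1 < γ) (k : ℝ) :
    Summable (fun n : ℤ => jb ((n : ℝ) - k) ^ (-γ)) ∧
      ∑' n : ℤ, jb ((n : ℝ) - k) ^ (-γ) ≤ 2 ^ γ * ∑' n : ℤ, jb (n : ℝ) ^ (-γ) := by
  have hs := (summable_jb hγ).mul_left (2 ^ γ)
  have h1 : Summable (fun m : ℤ => jb (((m + ⌊k⌋ : ℤ) : ℝ) - k) ^ (-γ)) :=
    Summable.of_nonneg_of_le (fun m => Real.rpow_nonneg (jb_pos _).le _)
      (jb_shift_bound hγ k) hs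
  refine ⟨(Equiv.addRight ⌊k⌋).summable_iff.mp h1, ?_⟩
  rw [← (Equiv.addRight ⌊k⌋).tsum_eq (fun n : ℤ => jb ((n : ℝ) - k) ^ (-γ)), ← tsum_mul_left]
  exact h1.tsum_le_tsum (jb_shift_bound hγ k) hs

lemma jb_triangle (x y : ℝ) : jb (x - y) ≤ jb x + jb y := by
  refine le_sqr_aux ?_ (by linarith [jb_pos x, jb_pos y])
  have h : |x| * |y| ≤ jb x * jb y :=
    mul_le_mul (abs_le_jb x) (abs_le_jb y) (abs_nonneg y) (jb_pos x).le
  have h' : -(x * y) ≤ |x| * |y| := by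
    rw [← abs_mul]; exact neg_le_abs _
  rw [jb_sq, add_sq, jb_sq, jb_sq]
  nlinarith

lemma jb_pointwise {β γ : ℝ} (hβγ : β ≥ γ) (hγ : 1 < γ) (x y : ℝ) :
    jb x ^ (-β) * jb y ^ (-γ) ≤
      (2 ^ γ * jb (y - x) ^ (-γ)) * (jb x ^ (-γ) + jb y ^ (-γ)) := by
  have hx : jb x ^ (-β) ≤ jb x ^ (-γ) :=
    Real.rpow_le_rpow_of_exponent_le (jb_one_le x) (by linarith)
  have px := Real.rpow_nonneg (jb_pos x).le (-γ)
  have py := Real.rpow_nonneg (jb_pos y).le (-γ)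
  have pd : 0 ≤ 2 ^ γ * jb (y - x) ^ (-γ) :=
    mul_nonneg (by positivity) (Real.rpow_nonneg (jb_pos _).le _)
  have ht := jb_triangle y x
  have h0 : jb x ^ (-β) * jb y ^ (-γ) ≤ jb x ^ (-γ) * jb y ^ (-γ) :=
    mul_le_mul_of_nonneg_right hx py
  rcases le_total (jb x) (jb y) with h | h
  · have := rpow_neg_le hγ (jb_pos (y - x)) (a := jb y) (by linarith)
    nlinarith [mul_le_mul_of_nonneg_left this px, mul_nonneg pd py]
  · have := rpow_neg_le hγ (jb_pos (y - x)) (a := jb x) (by linarith)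
    nlinarith [mul_le_mul_of_nonneg_right this py, mul_nonneg pd px]

/-- If `β ≥ γ > 1`, there is a constant `C = C(β, γ) > 0` such that for all real `k₁, k₂`,
`Σ_{n ∈ ℤ} ⟨n − k₁⟩^{−β} ⟨n − k₂⟩^{−γ} ≤ C ⟨k₁ − k₂⟩^{−γ}`. -/
theorem sum_bracket_convolution (β γ : ℝ) (hβγ : β ≥ γ) (hγ : 1 < γ) :
    ∃ C > 0, ∀ k₁ k₂ : ℝ,
      Summable (fun n : ℤ => jb ((n : ℝ) - k₁) ^ (-β) * jb ((n : ℝ) - k₂) ^ (-γ)) ∧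
      (∑' n : ℤ, jb ((n : ℝ) - k₁) ^ (-β) * jb ((n : ℝ) - k₂) ^ (-γ))
        ≤ C * jb (k₁ - k₂) ^ (-γ) := by
  set S := ∑' n : ℤ, jb (n : ℝ) ^ (-γ) with hS
  have hS0 : 0 ≤ S := tsum_nonneg fun n => Real.rpow_nonneg (jb_pos _).le _
  have h2 : (0 : ℝ) < 2 ^ γ := by positivity
  refine ⟨2 ^ γ * (2 * (2 ^ γ * S)) + 1, by positivity, fun k₁ k₂ => ?_⟩
  obtain ⟨s1, b1⟩ := jb_uniform hγ k₁
  obtain ⟨s2, b2⟩ := jb_uniform hγ k₂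
  have hd : 0 ≤ jb (k₁ - k₂) ^ (-γ) := Real.rpow_nonneg (jb_pos _).le _
  have hs := (s1.add s2).mul_left (2 ^ γ * jb (k₁ - k₂) ^ (-γ))
  have hp : ∀ n : ℤ, jb ((n : ℝ) - k₁) ^ (-β) * jb ((n : ℝ) - k₂) ^ (-γ) ≤
      (2 ^ γ * jb (k₁ - k₂) ^ (-γ)) * (jb ((n : ℝ) - k₁) ^ (-γ) + jb ((n : ℝ) - k₂) ^ (-γ)) := by
    intro n
    have h := jb_pointwise hβγ hγ ((n : ℝ) - k₁) ((n : ℝ) - k₂)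
    rwa [sub_sub_sub_cancel_left] at h
  have hsum := Summable.of_nonneg_of_le (fun n : ℤ => mul_nonneg
    (Real.rpow_nonneg (jb_pos ((n : ℝ) - k₁)).le (-β))
    (Real.rpow_nonneg (jb_pos ((n : ℝ) - k₂)).le (-γ))) hp hs
  refine ⟨hsum, (hsum.tsum_le_tsum hp hs).trans ?_⟩
  rw [tsum_mul_left, s1.tsum_add s2]
  have h3 := mul_le_mul_of_nonneg_left (add_le_add b1 b2) (mul_nonneg h2.le hd)
  refine h3.trans ?_
  rw [← hS]
  nlinarith
end

section
/- For every γ > 0, every s ∈ ℝ, and every sequence w : ℤ → ℂ with w₀ = 0, one has Σ_{k ∈ ℤ} ⟨k⟩^{2(s+1)} |w_k|² / (γ² + k⁶) ≤ 2 γ^{−4/3} Σ_{k ∈ ℤ} ⟨k⟩^{2s} |w_k|². Equivalently, the Fourier multiplier operator M₁ : w_k ↦ w_k/(γ − ik³) satisfies ‖M₁ w‖_{H^{s+1}} ≤ √2 · γ^{−2/3} ‖w‖_{H^s} on mean-zero sequences. -/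
/-- For `γ > 0`, `s ∈ ℝ`, and any mean-zero sequence `w : ℤ → ℂ` (i.e. `w₀ = 0`),
`Σ_k ⟨k⟩^{2(s+1)} |w_k|²/(γ² + k⁶) ≤ 2 γ^{−4/3} Σ_k ⟨k⟩^{2s} |w_k|²`:
the multiplier `M₁ : w_k ↦ w_k/(γ − ik³)` gains one derivative with constant `√2·γ^{−2/3}`. -/
theorem M1_gain_one_derivative (γ s : ℝ) (hγ : 0 < γ) (w : ℤ → ℂ) (h0 : w 0 = 0)
    (hw : Summable (fun k : ℤ => jb (k : ℝ) ^ (2 * s) * ‖w k‖^2)) :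
    Summable (fun k : ℤ => jb (k : ℝ) ^ (2 * (s + 1)) * ‖w k‖^2 / (γ^2 + (k : ℝ)^6)) ∧
    (∑' k : ℤ, jb (k : ℝ) ^ (2 * (s + 1)) * ‖w k‖^2 / (γ^2 + (k : ℝ)^6))
      ≤ 2 * γ ^ (-(4 : ℝ)/3) * ∑' k : ℤ, jb (k : ℝ) ^ (2 * s) * ‖w k‖^2 := by
  obtain ⟨g, hg, hgγ⟩ : ∃ g : ℝ, 0 < g ∧ γ = g ^ 3 := by
    refine ⟨γ ^ ((1 : ℝ) / 3), Real.rpow_pos_of_pos hγ _, ?_⟩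
    rw [← Real.rpow_natCast, ← Real.rpow_mul hγ.le]
    norm_num
  have hpow : γ ^ (-(4 : ℝ) / 3) = (g ^ 4)⁻¹ := by
    rw [hgγ, ← Real.rpow_natCast, ← Real.rpow_mul hg.le, ← Real.rpow_natCast,
      ← Real.rpow_neg hg.le]
    norm_num
  have hjb : ∀ x : ℝ, 0 < jb x := fun x => Real.sqrt_pos.mpr (by positivity)
  have hnn : ∀ k : ℤ,
      0 ≤ jb (k : ℝ) ^ (2 * (s + 1)) * ‖w k‖^2 / (γ^2 + (k : ℝ)^6) := by
    intro k
    have h1 := Real.rpow_nonneg (hjb k).le (2 * (s + 1))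
    positivity
  have hle : ∀ k : ℤ, jb (k : ℝ) ^ (2 * (s + 1)) * ‖w k‖^2 / (γ^2 + (k : ℝ)^6)
      ≤ 2 * γ ^ (-(4 : ℝ)/3) * (jb (k : ℝ) ^ (2 * s) * ‖w k‖^2) := by
    intro k
    by_cases hk : k = 0
    · subst hk
      simp [h0]
    have hk1 : (1 : ℝ) ≤ (k : ℝ) ^ 2 := by
      have : (1 : ℤ) ≤ k ^ 2 := by
        have : 0 < k ^ 2 := by positivity
        omega
      exact_mod_cast this
    have hsplit : jb (k : ℝ) ^ (2 * (s + 1)) = jb (k : ℝ) ^ (2 * s) * (1 + (k : ℝ) ^ 2) := by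
      have h2 : jb (k : ℝ) ^ (2 : ℝ) = 1 + (k : ℝ) ^ 2 := by
        rw [Real.rpow_two, jb, Real.sq_sqrt (by positivity)]
      rw [mul_add, mul_one, Real.rpow_add (hjb k), h2]
    have hden : 0 < γ ^ 2 + (k : ℝ) ^ 6 := by positivity
    have key : (1 + (k : ℝ) ^ 2) / (γ ^ 2 + (k : ℝ) ^ 6) ≤ 2 * (g ^ 4)⁻¹ := by
      rw [← div_eq_mul_inv, div_le_div_iff₀ hden (by positivity), hgγ]
      have ha : 0 ≤ g ^ 2 := by positivity
      have hb : 0 ≤ (k : ℝ) ^ 2 := by positivity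
      have h3 : (g ^ 2) ^ 2 * (k : ℝ) ^ 2 ≤ (g ^ 2) ^ 3 + ((k : ℝ) ^ 2) ^ 3 := by
        generalize g ^ 2 = a at *
        generalize (k : ℝ) ^ 2 = b at *
        rcases le_total a b with h | h
        · have : a ^ 2 * b ≤ b ^ 2 * b := by gcongr
          have : 0 ≤ a ^ 3 := by positivity
          nlinarith
        · have : a ^ 2 * b ≤ a ^ 2 * a := by gcongr
          have : 0 ≤ b ^ 3 := by positivity
          nlinarith
      have h4 : g ^ 4 * 1 ≤ g ^ 4 * (k : ℝ) ^ 2 := by gcongr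
      nlinarith
    have hc : 0 ≤ jb (k : ℝ) ^ (2 * s) * ‖w k‖ ^ 2 := by
      have h1 := Real.rpow_nonneg (hjb k).le (2 * s)
      positivity
    rw [hsplit, hpow]
    calc _ = (1 + (k : ℝ) ^ 2) / (γ ^ 2 + (k : ℝ) ^ 6) *
          (jb (k : ℝ) ^ (2 * s) * ‖w k‖ ^ 2) := by ring
      _ ≤ _ := mul_le_mul_of_nonneg_right key hc
  have hs := Summable.of_nonneg_of_le hnn hle (hw.mul_left _)
  refine ⟨hs, ?_⟩
  rw [← tsum_mul_left]
  exact hs.tsum_le_tsum hle (hw.mul_left _)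
end

section
/- For every α ∈ (0,1], every γ > 0, every s ∈ ℝ, and every sequence w : ℤ → ℂ with w₀ = 0, one has Σ_{k ∈ ℤ} ⟨k⟩^{2(s+1)} |w_k|² / (γ² + α²k⁶) ≤ 2 α^{−2/3} γ^{−4/3} Σ_{k ∈ ℤ} ⟨k⟩^{2s} |w_k|². Equivalently, the Fourier multiplier operator M₂ : w_k ↦ w_k/(γ − iαk³) satisfies ‖M₂ w‖_{H^{s+1}} ≤ √2 · α^{−1/3} γ^{−2/3} ‖w‖_{H^s} on mean-zero sequences. -/
/-- For `α ∈ (0,1]`, `γ > 0`, `s ∈ ℝ`, and any mean-zero sequence `w : ℤ → ℂ`,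
`Σ_k ⟨k⟩^{2(s+1)} |w_k|²/(γ² + α²k⁶) ≤ 2 α^{−2/3} γ^{−4/3} Σ_k ⟨k⟩^{2s} |w_k|²`:
the multiplier `M₂ : w_k ↦ w_k/(γ − iαk³)` gains one derivative with constant
`√2·α^{−1/3}·γ^{−2/3}`. -/
theorem M2_gain_one_derivative (α γ s : ℝ) (hα : α ∈ Set.Ioc (0 : ℝ) 1) (hγ : 0 < γ)
    (w : ℤ → ℂ) (h0 : w 0 = 0)
    (hw : Summable (fun k : ℤ => jb (k : ℝ) ^ (2 * s) * ‖w k‖^2)) :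
    Summable (fun k : ℤ => jb (k : ℝ) ^ (2 * (s + 1)) * ‖w k‖^2 / (γ^2 + α^2 * (k : ℝ)^6)) ∧
    (∑' k : ℤ, jb (k : ℝ) ^ (2 * (s + 1)) * ‖w k‖^2 / (γ^2 + α^2 * (k : ℝ)^6))
      ≤ 2 * α ^ (-(2 : ℝ)/3) * γ ^ (-(4 : ℝ)/3) * ∑' k : ℤ, jb (k : ℝ) ^ (2 * s) * ‖w k‖^2 := by
  obtain ⟨hα0, _⟩ := hα
  have key : ∀ k : ℤ, jb (k : ℝ) ^ (2 * (s + 1)) * ‖w k‖^2 / (γ^2 + α^2 * (k : ℝ)^6)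
      ≤ 2 * α ^ (-(2 : ℝ)/3) * γ ^ (-(4 : ℝ)/3) * (jb (k : ℝ) ^ (2 * s) * ‖w k‖^2) := by
    intro k
    by_cases hk : k = 0
    · subst hk
      simp [h0]
    have hjpos : 0 < jb (k : ℝ) := Real.sqrt_pos.mpr (by positivity)
    have hj : jb (k : ℝ) ^ (2 * (s + 1)) = jb (k : ℝ) ^ (2 * s) * (1 + (k : ℝ)^2) := by
      rw [show 2 * (s + 1) = 2 * s + (2 : ℕ) by push_cast; ring, Real.rpow_add hjpos,
        Real.rpow_natCast]
      congr 1
      exact Real.sq_sqrt (by positivity)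
    have hk1 : (1 : ℝ) ≤ (k : ℝ)^2 := by
      have : (1 : ℤ) ≤ k^2 := by
        have : 0 < k^2 := by positivity
        omega
      exact_mod_cast this
    obtain ⟨A, hA⟩ : ∃ A, A = α ^ ((2 : ℝ)/3) := ⟨_, rfl⟩
    obtain ⟨G, hG⟩ : ∃ G, G = γ ^ ((2 : ℝ)/3) := ⟨_, rfl⟩
    have hA0 : 0 < A := hA ▸ Real.rpow_pos_of_pos hα0 _
    have hG0 : 0 < G := hG ▸ Real.rpow_pos_of_pos hγ _
    have hA3 : α^2 = A^3 := by
      rw [hA, ← Real.rpow_natCast, ← Real.rpow_natCast, ← Real.rpow_mul hα0.le]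
      norm_num
    have hG3 : γ^2 = G^3 := by
      rw [hG, ← Real.rpow_natCast, ← Real.rpow_natCast, ← Real.rpow_mul hγ.le]
      norm_num
    have hAi : α ^ (-(2 : ℝ)/3) = A⁻¹ := by
      rw [hA, ← Real.rpow_neg hα0.le]
      norm_num
    have hGi : γ ^ (-(4 : ℝ)/3) = (G^2)⁻¹ := by
      rw [hG, ← Real.rpow_natCast, ← Real.rpow_mul hγ.le, ← Real.rpow_neg hγ.le]
      norm_num
    rw [hj, hAi, hGi, hA3, hG3]
    have hP : 0 ≤ jb (k : ℝ) ^ (2 * s) * ‖w k‖^2 := by positivity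
    have hD : 0 < G^3 + A^3 * (k : ℝ)^6 := by positivity
    have hY : (A * (k : ℝ)^2) * G^2 ≤ G^3 + A^3 * (k : ℝ)^6 := by
      have ht : 0 < A * (k : ℝ)^2 := by positivity
      have e : A^3 * (k : ℝ)^6 = (A * (k : ℝ)^2)^3 := by ring
      rw [e]
      generalize A * (k : ℝ)^2 = t at ht
      rcases le_total t G with h | h
      · nlinarith [mul_le_mul_of_nonneg_right h (sq_nonneg G), pow_pos ht 3]
      · have : G^2 ≤ t^2 := by gcongr
        nlinarith [mul_le_mul_of_nonneg_left this ht.le, pow_pos hG0 3]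
    have hm : (1 + (k : ℝ)^2) / (G^3 + A^3 * (k : ℝ)^6) ≤ 2 * A⁻¹ * (G^2)⁻¹ := by
      rw [show 2 * A⁻¹ * (G^2)⁻¹ = 2 / (A * G^2) by field_simp,
        div_le_div_iff₀ hD (by positivity)]
      have : A * G^2 * 1 ≤ A * G^2 * (k : ℝ)^2 := by gcongr
      nlinarith
    calc _ = (1 + (k : ℝ)^2) / (G^3 + A^3 * (k : ℝ)^6) * (jb (k : ℝ) ^ (2 * s) * ‖w k‖^2) := by
          ring
      _ ≤ _ := mul_le_mul_of_nonneg_right hm hP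
  have hR := hw.mul_left (2 * α ^ (-(2 : ℝ)/3) * γ ^ (-(4 : ℝ)/3))
  have hS : Summable (fun k : ℤ =>
      jb (k : ℝ) ^ (2 * (s + 1)) * ‖w k‖^2 / (γ^2 + α^2 * (k : ℝ)^6)) := by
    refine Summable.of_nonneg_of_le (fun k => ?_) key hR
    have : 0 ≤ jb (k : ℝ) := Real.sqrt_nonneg _
    positivity
  refine ⟨hS, ?_⟩
  rw [← tsum_mul_left]
  exact hS.tsum_le_tsum key hR
end

section
/- For every γ > 0, every s ∈ ℝ, and every sequence w : ℤ → ℂ with w₀ = 0, one has Σ_{k ∈ ℤ} ⟨k⟩^{2(s+2)} |w_k|² / (γ² + k⁶) ≤ 4 γ^{−2/3} Σ_{k ∈ ℤ} ⟨k⟩^{2s} |w_k|². Equivalently, the Fourier multiplier operator M₁ : w_k ↦ w_k/(γ − ik³) satisfies ‖M₁ w‖_{H^{s+2}} ≤ 2 γ^{−1/3} ‖w‖_{H^s} on mean-zero sequences. -/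
/-- For `γ > 0`, `s ∈ ℝ`, and any mean-zero sequence `w : ℤ → ℂ` (i.e. `w₀ = 0`),
`Σ_k ⟨k⟩^{2(s+2)} |w_k|²/(γ² + k⁶) ≤ 4 γ^{−2/3} Σ_k ⟨k⟩^{2s} |w_k|²`:
the multiplier `M₁ : w_k ↦ w_k/(γ − ik³)` gains two derivatives with constant `2·γ^{−1/3}`. -/
theorem M1_gain_two_derivatives (γ s : ℝ) (hγ : 0 < γ) (w : ℤ → ℂ) (h0 : w 0 = 0)
    (hw : Summable (fun k : ℤ => jb (k : ℝ) ^ (2 * s) * ‖w k‖^2)) :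
    Summable (fun k : ℤ => jb (k : ℝ) ^ (2 * (s + 2)) * ‖w k‖^2 / (γ^2 + (k : ℝ)^6)) ∧
    (∑' k : ℤ, jb (k : ℝ) ^ (2 * (s + 2)) * ‖w k‖^2 / (γ^2 + (k : ℝ)^6))
      ≤ 4 * γ ^ (-(2 : ℝ)/3) * ∑' k : ℤ, jb (k : ℝ) ^ (2 * s) * ‖w k‖^2 := by
  have hpt : ∀ k : ℤ, jb (k : ℝ) ^ (2 * (s + 2)) * ‖w k‖^2 / (γ^2 + (k : ℝ)^6)
      ≤ 4 * γ ^ (-(2 : ℝ)/3) * (jb (k : ℝ) ^ (2 * s) * ‖w k‖^2) := by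
    intro k
    by_cases hk : k = 0
    · subst hk
      simp [h0]
    have hk1 : (1 : ℝ) ≤ (k : ℝ)^2 := by
      have : (1 : ℤ) ≤ k^2 := by
        have := sq_pos_of_ne_zero hk
        omega
      exact_mod_cast this
    have hjpos : 0 < jb (k : ℝ) := Real.sqrt_pos.mpr (by positivity)
    have hj4 : jb (k : ℝ) ^ (4 : ℝ) = (1 + (k : ℝ)^2)^2 := by
      have h2 : jb (k : ℝ) ^ 2 = 1 + (k : ℝ)^2 := Real.sq_sqrt (by positivity)
      have h4 : jb (k : ℝ) ^ (4 : ℝ) = jb (k : ℝ) ^ (4 : ℕ) := by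
        rw [← Real.rpow_natCast]
        norm_num
      rw [h4, ← h2]
      ring
    have hsplit : jb (k : ℝ) ^ (2 * (s + 2)) = jb (k : ℝ) ^ (2 * s) * (1 + (k : ℝ)^2)^2 := by
      rw [← hj4, ← Real.rpow_add hjpos]
      congr 1
      ring
    obtain ⟨g, hg⟩ : ∃ g : ℝ, g = γ ^ ((2 : ℝ)/3) := ⟨_, rfl⟩
    have hgpos : 0 < g := hg ▸ Real.rpow_pos_of_pos hγ _
    have hg3 : γ^2 = g^3 := by
      rw [hg, ← Real.rpow_natCast (γ ^ ((2 : ℝ)/3)), ← Real.rpow_mul hγ.le, ← Real.rpow_natCast γ]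
      norm_num
    have hginv : γ ^ (-(2 : ℝ)/3) = g⁻¹ := by
      rw [hg, ← Real.rpow_neg hγ.le]
      congr 1
      ring
    have hk6 : (k : ℝ)^6 = ((k : ℝ)^2)^3 := by ring
    rw [hsplit, hginv, hg3, hk6]
    generalize (k : ℝ)^2 = a at hk1 ⊢
    have hP : 0 ≤ jb (k : ℝ) ^ (2 * s) * ‖w k‖^2 := by positivity
    have ha : 0 < a := by linarith
    have key : a^2 * g ≤ g^3 + a^3 := by
      rcases le_total a g with h | h
      · have : a^2 * g ≤ g^2 * g := by gcongr
        nlinarith [pow_pos ha 3]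
      · have : a^2 * g ≤ a^2 * a := by gcongr
        nlinarith [pow_pos hgpos 3]
    have h1 : (1 + a)^2 ≤ 4 * a^2 := by nlinarith
    have h2 : (1 + a)^2 ≤ 4 * g⁻¹ * (g^3 + a^3) := by
      have : a^2 ≤ g⁻¹ * (g^3 + a^3) := by
        rw [inv_mul_eq_div, le_div_iff₀ hgpos]
        exact key
      linarith
    rw [div_le_iff₀ (by positivity)]
    calc _ = (jb (k : ℝ) ^ (2 * s) * ‖w k‖^2) * (1 + a)^2 := by ring
      _ ≤ (jb (k : ℝ) ^ (2 * s) * ‖w k‖^2) * (4 * g⁻¹ * (g^3 + a^3)) := by gcongr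
      _ = _ := by ring
  have hr := hw.mul_left (4 * γ ^ (-(2 : ℝ)/3))
  have hS : Summable (fun k : ℤ => jb (k : ℝ) ^ (2 * (s + 2)) * ‖w k‖^2 / (γ^2 + (k : ℝ)^6)) := by
    refine Summable.of_nonneg_of_le (fun k => ?_) hpt hr
    have hj : 0 ≤ jb (k : ℝ) := Real.sqrt_nonneg _
    have := Real.rpow_nonneg hj (2 * (s + 2))
    positivity
  refine ⟨hS, ?_⟩
  rw [← tsum_mul_left]
  exact hS.tsum_le_tsum hpt hr
end

section
/- Let α ∈ (0,1). For all real numbers k and x with |x − c₁k| ≥ 1/2 and |x − c₂k| ≥ 1/2, one has |k³ − αx³ − α(k − x)³| ≥ (3α(c₁ − c₂)/4) · k². -/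
/-- The smaller root `c₂ = 1/2 − √(12/α − 3)/6` of `3αx² − 3αx + (α − 1)`. -/
noncomputable def c2 (α : ℝ) : ℝ := 1/2 - Real.sqrt (12/α - 3)/6

/-- For `α ∈ (0,1)` and real `k`, `x` with `|x − c₁k| ≥ 1/2` and `|x − c₂k| ≥ 1/2`, one has
`|k³ − αx³ − α(k − x)³| ≥ (3α(c₁ − c₂)/4)·k²`. -/
theorem resonance_lower_bound_c (α : ℝ) (hα : α ∈ Set.Ioo (0:ℝ) 1) (k x : ℝ)
    (h1 : 1/2 ≤ |x - c1 α * k|) (h2 : 1/2 ≤ |x - c2 α * k|) :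
    3 * α * (c1 α - c2 α) / 4 * k^2 ≤ |k^3 - α * x^3 - α * (k - x)^3| := by
  obtain ⟨h0, h01⟩ := hα
  have hs : Real.sqrt (12/α - 3) ^ 2 = 12/α - 3 := by
    apply Real.sq_sqrt
    have : 12 ≤ 12/α := by
      rw [le_div_iff₀ h0]
      linarith
    linarith
  have hs2 : α * Real.sqrt (12/α - 3) ^ 2 = 12 - 3 * α := by
    rw [hs]
    field_simp
  have hfac : k^3 - α * x^3 - α * (k - x)^3
      = -(3 * α) * (k * ((x - c1 α * k) * (x - c2 α * k))) := by
    unfold c1 c2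
    linear_combination (-(k^3) / 12) * hs2
  have hpos : 0 ≤ c1 α - c2 α := by
    unfold c1 c2
    have := Real.sqrt_nonneg (12/α - 3)
    linarith
  have htri : (c1 α - c2 α) * |k| ≤ |x - c1 α * k| + |x - c2 α * k| := by
    have h := abs_sub (x - c2 α * k) (x - c1 α * k)
    have e : (x - c2 α * k) - (x - c1 α * k) = (c1 α - c2 α) * k := by ring
    rw [e, abs_mul, abs_of_nonneg hpos] at h
    linarith
  have hprod : (c1 α - c2 α) * |k| / 4 ≤ |x - c1 α * k| * |x - c2 α * k| := by
    nlinarith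
  rw [hfac, abs_mul, abs_mul, abs_mul, abs_neg, abs_of_pos (by linarith : 0 < 3 * α)]
  have hk := mul_le_mul_of_nonneg_left hprod
    (mul_nonneg (by linarith : 0 ≤ 3 * α) (abs_nonneg k))
  have hk2 : |k| ^ 2 = k ^ 2 := sq_abs k
  rw [← hk2]
  linarith
end

section
/- Let α ∈ (0,1), suppose both d₁ and d₂ are of type ν for some ν ≥ 0, let s > 1/2, and let s₁ ∈ ℝ satisfy s₁ − s < min{1, 2s − 1 − ν}. Then there exists a constant C > 0 such that for every k ∈ ℤ, ⟨k⟩^{2 + 2s₁ − 2s} · Σ_{k₁ ∈ ℤ, k₁ > 0} ⟨k₁⟩^{4 − 4s} / [ (k₁ − d₁k)² (k₁ − d₂k)² (k₁ + d₁k)² (k₁ + d₂k)² ] ≤ C. (For k₁ > 0 none of the four factors vanishes, since d₁ and d₂ are irrational.) -/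
/-- `d₁ = 1/c₁`. -/
noncomputable def d1 (α : ℝ) : ℝ := (c1 α)⁻¹

/-- `d₂ = 1/c₂`. -/
noncomputable def d2 (α : ℝ) : ℝ := (c2 α)⁻¹

/-- A real number `ρ` is of type `ν` if there is `K > 0` with
`|ρ − m/n| ≥ K/|n|^{2+ν}` for all integers `m` and all nonzero integers `n`. -/
def IsOfType (ρ ν : ℝ) : Prop :=
  ∃ K > 0, ∀ m n : ℤ, n ≠ 0 → K / |(n : ℝ)| ^ (2 + ν) ≤ |ρ - (m : ℝ) / (n : ℝ)|

/-- The `k₁`-summand of the resonant (`k₁ + k₂ = 0`) part of the `R₃` multiplier sum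
(zero unless `k₁ > 0`). -/
noncomputable def R3resSummand (α s : ℝ) (k k₁ : ℤ) : ℝ :=
  if 0 < k₁ then
    jb (k₁ : ℝ) ^ (4 - 4 * s) /
      (((k₁ : ℝ) - d1 α * (k : ℝ))^2 * ((k₁ : ℝ) - d2 α * (k : ℝ))^2
        * ((k₁ : ℝ) + d1 α * (k : ℝ))^2 * ((k₁ : ℝ) + d2 α * (k : ℝ))^2)
  else 0

/-- Powers of the bracket in terms of powers of `1 + x²`. -/
lemma jb_rpow (x q : ℝ) : jb x ^ q = (1 + x ^ 2) ^ (q / 2) := by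
  unfold jb
  rw [Real.sqrt_eq_rpow, ← Real.rpow_mul (by positivity)]
  congr 1; ring

lemma rpow_compare (u v M q : ℝ) (hu : 0 < u) (hv : 0 < v) (hM : 1 ≤ M)
    (h1 : v ≤ M * u) (h2 : u ≤ M * v) : v ^ q ≤ M ^ |q| * u ^ q := by
  have hM0 : 0 < M := by linarith
  rcases le_total 0 q with hq | hq
  · rw [abs_of_nonneg hq, ← Real.mul_rpow hM0.le hu.le]
    exact Real.rpow_le_rpow hv.le h1 hq
  · rw [abs_of_nonpos hq, Real.rpow_neg hM0.le]
    have h := Real.rpow_le_rpow_of_nonpos hu h2 hq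
    rw [Real.mul_rpow hM0.le hv.le] at h
    have hMq : 0 < M ^ q := Real.rpow_pos_of_pos hM0 q
    rw [inv_mul_eq_div, le_div_iff₀ hMq]
    linarith

/-- Lower bound from the type condition. -/
lemma type_lower (a ν : ℝ) (hν : 0 ≤ ν) (ha : IsOfType a ν) :
    ∃ C > 0, ∀ k m : ℤ,
      (1 + (k : ℝ) ^ 2) ^ (-1 - ν) * (1 / ((m : ℝ) - a * k) ^ 2) ≤ C := by
  obtain ⟨K, hK, h⟩ := ha
  refine ⟨1 + 1 / K ^ 2, by positivity, fun k m => ?_⟩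
  have hu : (0 : ℝ) < 1 + (k : ℝ) ^ 2 := by positivity
  by_cases hk : k = 0
  · subst hk
    simp only [Int.cast_zero, mul_zero, sub_zero]
    norm_num
    by_cases hm : m = 0
    · subst hm; simp; positivity
    · have : (1 : ℝ) ≤ (m : ℝ) ^ 2 := by
        have : (1 : ℤ) ≤ m ^ 2 := by have := sq_pos_of_ne_zero hm; omega
        exact_mod_cast this
      have h1 := inv_le_one_of_one_le₀ this
      have : 0 < (K ^ 2)⁻¹ := by positivity
      linarith
  · have hk' : (k : ℝ) ≠ 0 := by exact_mod_cast hk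
    have hka : 0 < |(k : ℝ)| := abs_pos.mpr hk'
    have h1 := h m k hk
    have h2 : |a - (m : ℝ) / k| * |(k : ℝ)| = |(m : ℝ) - a * k| := by
      rw [← abs_mul, ← abs_neg]; congr 1; field_simp; ring
    have h3 : K ≤ |(m : ℝ) - a * k| * |(k : ℝ)| ^ (1 + ν) := by
      rw [← h2, mul_assoc]
      rw [div_le_iff₀ (Real.rpow_pos_of_pos hka _)] at h1
      have : |(k : ℝ)| ^ (2 + ν) = |(k : ℝ)| * |(k : ℝ)| ^ (1 + ν) := by
        rw [show (2 : ℝ) + ν = 1 + (1 + ν) by ring, Real.rpow_add hka 1, Real.rpow_one]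
      rwa [this] at h1
    have h4 : K ^ 2 ≤ ((m : ℝ) - a * k) ^ 2 * ((k : ℝ) ^ 2) ^ (1 + ν) := by
      have := pow_le_pow_left₀ hK.le h3 2
      rw [mul_pow, sq_abs, ← Real.rpow_natCast (|(k : ℝ)| ^ (1 + ν)), ← Real.rpow_mul hka.le,
        mul_comm (1 + ν), Real.rpow_mul hka.le, Real.rpow_natCast, sq_abs] at this
      exact this
    have h5 : ((k : ℝ) ^ 2) ^ (1 + ν) ≤ (1 + (k : ℝ) ^ 2) ^ (1 + ν) :=
      Real.rpow_le_rpow (by positivity) (by linarith) (by linarith)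
    have h6 : K ^ 2 ≤ ((m : ℝ) - a * k) ^ 2 * (1 + (k : ℝ) ^ 2) ^ (1 + ν) :=
      h4.trans (mul_le_mul_of_nonneg_left h5 (by positivity))
    rw [show -1 - ν = -(1 + ν) by ring, Real.rpow_neg hu.le, ← one_div, one_div_mul_one_div]
    have := one_div_le_one_div_of_le (by positivity) h6
    rw [mul_comm (_ ^ 2)] at this
    linarith

/-- Uniform bound for the sum of inverse squares. -/
lemma sum_bound (a ν : ℝ) (hν : 0 ≤ ν) (ha : IsOfType a ν) :
    ∃ C > 0, ∀ k : ℤ,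
      Summable (fun n : ℤ => (1 + (k : ℝ) ^ 2) ^ (-1 - ν) * (1 / ((n : ℝ) - a * k) ^ 2)) ∧
      ∑' n : ℤ, (1 + (k : ℝ) ^ 2) ^ (-1 - ν) * (1 / ((n : ℝ) - a * k) ^ 2) ≤ C := by
  obtain ⟨C, hC, h⟩ := type_lower a ν hν ha
  have hS : Summable (fun n : ℤ => 1 / (n : ℝ) ^ 2) :=
    Real.summable_one_div_int_pow.mpr (by norm_num)
  refine ⟨C + 4 * ∑' n : ℤ, 1 / (n : ℝ) ^ 2, ?_, fun k => ?_⟩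
  · have : 0 ≤ ∑' n : ℤ, 1 / (n : ℝ) ^ 2 := tsum_nonneg fun n => by positivity
    linarith
  set x := a * (k : ℝ) with hx
  set m := round x with hm
  have hw1 : (1 + (k : ℝ) ^ 2) ^ (-1 - ν) ≤ 1 :=
    Real.rpow_le_one_of_one_le_of_nonpos (by nlinarith [sq_nonneg (k : ℝ)]) (by linarith)
  have hw0 : 0 ≤ (1 + (k : ℝ) ^ 2) ^ (-1 - ν) := by positivity
  have hH1 : HasSum (fun n : ℤ => if n = m then C else 0) C := hasSum_ite_eq m C
  have hH2 : HasSum (fun n : ℤ => 4 * (1 / ((n - m : ℤ) : ℝ) ^ 2))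
      (4 * ∑' n : ℤ, 1 / (n : ℝ) ^ 2) := by
    have := ((Equiv.subRight m).hasSum_iff (f := fun n : ℤ => 1 / (n : ℝ) ^ 2)).mpr hS.hasSum
    exact this.mul_left 4
  have hH := hH1.add hH2
  have hle : ∀ n : ℤ, (1 + (k : ℝ) ^ 2) ^ (-1 - ν) * (1 / ((n : ℝ) - x) ^ 2) ≤
      (if n = m then C else 0) + 4 * (1 / ((n - m : ℤ) : ℝ) ^ 2) := by
    intro n
    split_ifs with hn
    · subst hn
      have := h k m
      rw [← hx] at this
      simpa using this
    · rw [zero_add]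
      have h1 : (1 : ℝ) ≤ |((n - m : ℤ) : ℝ)| := by
        have : (1 : ℤ) ≤ |n - m| := Int.one_le_abs (sub_ne_zero.mpr hn)
        exact_mod_cast this
      have h2 : |x - m| ≤ 1 / 2 := abs_sub_round x
      have h3 : |((n - m : ℤ) : ℝ)| ≤ |(n : ℝ) - x| + |x - m| := by
        push_cast
        exact abs_sub_le _ _ _
      have h4 : |((n - m : ℤ) : ℝ)| / 2 ≤ |(n : ℝ) - x| := by linarith
      have h5 := pow_le_pow_left₀ (by positivity) h4 2
      rw [sq_abs, div_pow, sq_abs] at h5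
      have h6 : (0 : ℝ) < ((n - m : ℤ) : ℝ) ^ 2 := by
        rw [← sq_abs]; positivity
      have h7 := one_div_le_one_div_of_le (by positivity) h5
      calc _ ≤ 1 * (1 / ((n : ℝ) - x) ^ 2) := by gcongr
        _ ≤ 1 / (((n - m : ℤ) : ℝ) ^ 2 / 2 ^ 2) := by rw [one_mul]; exact h7
        _ = _ := by field_simp; norm_num
  have hsum : Summable (fun n : ℤ => (1 + (k : ℝ) ^ 2) ^ (-1 - ν) * (1 / ((n : ℝ) - x) ^ 2)) :=
    Summable.of_nonneg_of_le (fun n => by positivity) hle hH.summable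
  exact ⟨hsum, hasSum_le hle hsum.hasSum hH⟩

/-- Near-resonance geometry. -/
lemma near_geom (x y : ℝ) (hx : 0 < x) (hxy : x ≠ y) :
    ∃ c₀ > 0, ∃ L ≥ 1, ∀ c, 0 < c → c ≤ c₀ → ∀ X Z : ℝ, 0 ≤ X → 0 ≤ Z →
      |X - x * Z| < c * (X + Z) →
      c * (X + Z) ≤ |X - y * Z| ∧ Z ≤ L * X ∧ X ≤ L * Z := by
  have hd : 0 < |x - y| := abs_pos.mpr (sub_ne_zero.mpr hxy)
  refine ⟨min (1 / 2) (min (x / 2) (|x - y| / (4 * (x + 1)))), by positivity,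
    max 1 (max (3 / x) (2 * x + 1)), le_max_left _ _, ?_⟩
  intro c hc hcc X Z hX hZ h
  have hc1 : c ≤ 1 / 2 := hcc.trans (min_le_left _ _)
  have hc2 : c ≤ x / 2 := hcc.trans ((min_le_right _ _).trans (min_le_left _ _))
  have hc3 : c ≤ |x - y| / (4 * (x + 1)) :=
    hcc.trans ((min_le_right _ _).trans (min_le_right _ _))
  rw [le_div_iff₀ (by positivity)] at hc3
  have hab := abs_lt.mp h
  have e1 : c * X ≤ 1 / 2 * X := mul_le_mul_of_nonneg_right hc1 hX
  have e2 : c * Z ≤ 1 / 2 * Z := mul_le_mul_of_nonneg_right hc1 hZ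
  have e3 : c * Z ≤ x / 2 * Z := mul_le_mul_of_nonneg_right hc2 hZ
  have hZX : Z ≤ 3 / x * X := by
    rw [div_mul_eq_mul_div, le_div_iff₀ hx]
    nlinarith [hab.1]
  have hXZ : X ≤ (2 * x + 1) * Z := by nlinarith [hab.2]
  refine ⟨?_, ?_, ?_⟩
  · have e4 : |x - y| * Z ≤ |X - x * Z| + |X - y * Z| := by
      have : |x - y| * Z = |(X - y * Z) - (X - x * Z)| := by
        rw [← abs_of_nonneg hZ, ← abs_mul, abs_of_nonneg hZ]; congr 1; ring
      rw [this, add_comm]; exact abs_sub _ _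
    have e5 : c * (4 * (x + 1)) * Z ≤ |x - y| * Z := mul_le_mul_of_nonneg_right hc3 hZ
    have e6 : c * X ≤ c * ((2 * x + 1) * Z) := mul_le_mul_of_nonneg_left hXZ hc.le
    nlinarith
  · exact hZX.trans (mul_le_mul_of_nonneg_right ((le_max_left _ _).trans (le_max_right _ _)) hX)
  · exact hXZ.trans (mul_le_mul_of_nonneg_right ((le_max_right _ _).trans (le_max_right _ _)) hZ)

/-- Splitting `1/(A²B²)`. -/
lemma split_inv (n w : ℝ) (hn : 0 < n ^ 2) :
    1 / ((n - w) ^ 2 * (n + w) ^ 2) ≤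
      1 / n ^ 2 * (1 / (n - w) ^ 2 + 1 / (n + w) ^ 2) := by
  by_cases hA : n - w = 0
  · rw [hA]; simp; positivity
  by_cases hB : n + w = 0
  · rw [hB]; simp; positivity
  have : 1 / n ^ 2 * (1 / (n - w) ^ 2 + 1 / (n + w) ^ 2)
      = (1 / ((n - w) ^ 2 * (n + w) ^ 2)) * (((n - w) ^ 2 + (n + w) ^ 2) / n ^ 2) := by
    field_simp; ring
  rw [this]
  apply le_mul_of_one_le_right (by positivity)
  rw [one_le_div hn]
  nlinarith [sq_nonneg w]

/-- Near-resonant pointwise bound. -/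
lemma near_bound (a b ν s t c L : ℝ) (hc : 0 < c) (hL : 1 ≤ L) (ht : t < 2 * s - 1 - ν) :
    ∃ C > 0, ∀ n k : ℝ, 1 ≤ n ^ 2 → k ^ 2 ≤ L * n ^ 2 → n ^ 2 ≤ L * k ^ 2 →
      c * (n ^ 2 + k ^ 2) ≤ |n ^ 2 - b ^ 2 * k ^ 2| →
      (1 + k ^ 2) ^ (1 + t) * ((1 + n ^ 2) ^ (2 - 2 * s) /
        ((n - a * k) ^ 2 * (n - b * k) ^ 2 * (n + a * k) ^ 2 * (n + b * k) ^ 2)) ≤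
      C * ((1 + k ^ 2) ^ (-1 - ν) * (1 / (n - a * k) ^ 2) +
        (1 + k ^ 2) ^ (-1 - ν) * (1 / (n + a * k) ^ 2)) := by
  set M := 2 * (1 + L) with hM
  have hM1 : 1 ≤ M := by linarith
  have hM0 : 0 < M := by linarith
  refine ⟨M ^ |2 - 2 * s| * (1 / c ^ 2) * M ^ 3, by positivity, fun n k hn h1 h2 h3 => ?_⟩
  set u := 1 + k ^ 2 with hu
  set v := 1 + n ^ 2 with hv
  have hu1 : 1 ≤ u := by nlinarith [sq_nonneg k]
  have hu0 : 0 < u := by linarith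
  have hv0 : 0 < v := by positivity
  have hun : u ≤ M * n ^ 2 := by nlinarith
  have hvu : v ≤ M * u := by nlinarith [sq_nonneg k]
  have huv : u ≤ M * v := by nlinarith
  have hn0 : 0 < n ^ 2 := by linarith
  have e1 := rpow_compare u v M (2 - 2 * s) hu0 hv0 hM1 hvu huv
  have e2 := split_inv n (a * k) hn0
  have e3 : 1 / ((n - b * k) ^ 2 * (n + b * k) ^ 2) ≤ 1 / c ^ 2 * (M ^ 2 / u ^ 2) := by
    have f1 : c * (u / M) ≤ |n ^ 2 - b ^ 2 * k ^ 2| := by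
      refine le_trans ?_ h3
      apply mul_le_mul_of_nonneg_left _ hc.le
      rw [div_le_iff₀ hM0]
      nlinarith [sq_nonneg k]
    have f2 := pow_le_pow_left₀ (by positivity) f1 2
    rw [sq_abs] at f2
    have f3 : (n - b * k) ^ 2 * (n + b * k) ^ 2 = (n ^ 2 - b ^ 2 * k ^ 2) ^ 2 := by ring
    rw [f3]
    refine (one_div_le_one_div_of_le (by positivity) f2).trans (le_of_eq ?_)
    field_simp
  have e4 : 1 / n ^ 2 ≤ M / u := by
    rw [div_le_div_iff₀ hn0 hu0]; linarith
  have e5 : u ^ (1 + t) * u ^ (2 - 2 * s) * (1 / u ^ 3) ≤ u ^ (-1 - ν) := by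
    rw [one_div, ← Real.rpow_natCast u 3, ← Real.rpow_neg hu0.le, ← Real.rpow_add hu0,
      ← Real.rpow_add hu0]
    apply Real.rpow_le_rpow_of_exponent_le hu1
    push_cast; linarith
  set R := 1 / (n - a * k) ^ 2 + 1 / (n + a * k) ^ 2 with hR
  have hR0 : 0 ≤ R := by positivity
  calc u ^ (1 + t) * (v ^ (2 - 2 * s) /
        ((n - a * k) ^ 2 * (n - b * k) ^ 2 * (n + a * k) ^ 2 * (n + b * k) ^ 2))
      = u ^ (1 + t) * (v ^ (2 - 2 * s) * ((1 / ((n - b * k) ^ 2 * (n + b * k) ^ 2)) *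
          (1 / ((n - a * k) ^ 2 * (n + a * k) ^ 2)))) := by
        rw [one_div_mul_one_div, mul_one_div]; congr 2; ring
    _ ≤ u ^ (1 + t) * ((M ^ |2 - 2 * s| * u ^ (2 - 2 * s)) *
          ((1 / c ^ 2 * (M ^ 2 / u ^ 2)) * (M / u * R))) := by
        have : 1 / ((n - a * k) ^ 2 * (n + a * k) ^ 2) ≤ M / u * R :=
          e2.trans (mul_le_mul_of_nonneg_right e4 hR0)
        gcongr
    _ = (M ^ |2 - 2 * s| * (1 / c ^ 2) * M ^ 3) *
          ((u ^ (1 + t) * u ^ (2 - 2 * s) * (1 / u ^ 3)) * R) := by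
        field_simp
    _ ≤ (M ^ |2 - 2 * s| * (1 / c ^ 2) * M ^ 3) * (u ^ (-1 - ν) * R) := by gcongr
    _ = _ := by rw [hR]; ring

/-- Non-resonant pointwise bound. -/
lemma far_bound (a b s t c : ℝ) (hc : 0 < c) (ht : t < 1) (hs : 1 / 2 < s) (n k : ℝ)
    (hn : 1 ≤ n ^ 2)
    (h1 : c * (n ^ 2 + k ^ 2) ≤ |n ^ 2 - a ^ 2 * k ^ 2|)
    (h2 : c * (n ^ 2 + k ^ 2) ≤ |n ^ 2 - b ^ 2 * k ^ 2|) :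
    (1 + k ^ 2) ^ (1 + t) * ((1 + n ^ 2) ^ (2 - 2 * s) /
        ((n - a * k) ^ 2 * (n - b * k) ^ 2 * (n + a * k) ^ 2 * (n + b * k) ^ 2)) ≤
      4 / c ^ 4 * |n| ^ (-(4 * s)) := by
  set S := n ^ 2 + k ^ 2 with hS
  have hk := sq_nonneg k
  have hS1 : 1 + k ^ 2 ≤ S := by linarith
  have hS0 : 0 < S := by linarith
  have g1 := pow_le_pow_left₀ (by positivity) h1 2
  have g2 := pow_le_pow_left₀ (by positivity) h2 2
  rw [sq_abs] at g1 g2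
  have g3 : c ^ 4 * S ^ 4 ≤
      (n - a * k) ^ 2 * (n - b * k) ^ 2 * (n + a * k) ^ 2 * (n + b * k) ^ 2 := by
    calc c ^ 4 * S ^ 4 = (c * S) ^ 2 * (c * S) ^ 2 := by ring
      _ ≤ (n ^ 2 - a ^ 2 * k ^ 2) ^ 2 * (n ^ 2 - b ^ 2 * k ^ 2) ^ 2 := by gcongr
      _ = _ := by ring
  have g4 : (1 + k ^ 2) ^ (1 + t) ≤ S ^ 2 := by
    calc (1 + k ^ 2) ^ (1 + t) ≤ (1 + k ^ 2) ^ (2 : ℝ) :=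
          Real.rpow_le_rpow_of_exponent_le (by linarith) (by linarith)
      _ = (1 + k ^ 2) ^ 2 := by rw [Real.rpow_two]
      _ ≤ S ^ 2 := by gcongr
  have hv0 : 0 < 1 + n ^ 2 := by positivity
  have g5 : 1 + n ^ 2 ≤ 2 * S := by linarith
  have hna : 0 < |n| := by
    apply abs_pos.mpr
    rintro rfl
    norm_num at hn
  have g6 : (1 + n ^ 2) ^ (-(2 * s)) ≤ |n| ^ (-(4 * s)) := by
    have : |n| ^ (-(4 * s)) = (n ^ 2) ^ (-(2 * s)) := by
      rw [← sq_abs n, ← Real.rpow_natCast |n| 2, ← Real.rpow_mul hna.le]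
      congr 1; push_cast; ring
    rw [this]
    exact Real.rpow_le_rpow_of_nonpos (by linarith) (by linarith) (by linarith)
  have g7 : (1 + n ^ 2) ^ (2 - 2 * s) = (1 + n ^ 2) ^ 2 * (1 + n ^ 2) ^ (-(2 * s)) := by
    rw [sub_eq_add_neg, Real.rpow_add hv0, Real.rpow_two]
  calc _ ≤ S ^ 2 * (((2 * S) ^ 2 * |n| ^ (-(4 * s))) / (c ^ 4 * S ^ 4)) := by
        rw [g7]; gcongr
    _ = _ := by field_simp; norm_num

lemma roots_facts (α : ℝ) (hα : α ∈ Set.Ioo (0 : ℝ) 1) :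
    d1 α ≠ 0 ∧ d2 α ≠ 0 ∧ d1 α ^ 2 ≠ d2 α ^ 2 := by
  obtain ⟨h0, h1⟩ := hα
  have h : 9 < 12 / α - 3 := by
    have : 12 < 12 / α := by rw [lt_div_iff₀ h0]; linarith
    linarith
  have hr : 3 < Real.sqrt (12 / α - 3) := by
    rw [Real.lt_sqrt (by norm_num)]; linarith
  have e1 : c1 α ≠ 0 := by unfold c1; intro; linarith
  have e2 : c2 α ≠ 0 := by unfold c2; intro; linarith
  refine ⟨inv_ne_zero e1, inv_ne_zero e2, ?_⟩
  unfold d1 d2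
  rw [inv_pow, inv_pow]
  intro h
  have h := inv_injective h
  unfold c1 c2 at h
  nlinarith

theorem R3_resonant_multiplier_bound (α : ℝ) (hα : α ∈ Set.Ioo (0 : ℝ) 1)
    (ν : ℝ) (hν : 0 ≤ ν) (hd1 : IsOfType (d1 α) ν) (hd2 : IsOfType (d2 α) ν)
    (s s₁ : ℝ) (hs : 1/2 < s) (hs₁ : s₁ - s < min 1 (2 * s - 1 - ν)) :
    ∃ C > 0, ∀ k : ℤ,
      Summable (fun k₁ : ℤ => R3resSummand α s k k₁) ∧
      jb (k : ℝ) ^ (2 + 2 * s₁ - 2 * s) * (∑' k₁ : ℤ, R3resSummand α s k k₁) ≤ C := by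
  obtain ⟨ha, hb, hab⟩ := roots_facts α hα
  have ht1 := hs₁.trans_le (min_le_left _ _)
  have ht2 := hs₁.trans_le (min_le_right _ _)
  obtain ⟨Sa, hSa, hsa⟩ := sum_bound _ ν hν hd1
  obtain ⟨Sb, hSb, hsb⟩ := sum_bound _ ν hν hd2
  unfold R3resSummand
  generalize d1 α = a at *
  generalize d2 α = b at *
  obtain ⟨ca, hca, La, hLa, ga⟩ := near_geom (a ^ 2) (b ^ 2) (by positivity) hab
  obtain ⟨cb, hcb, Lb, hLb, gb⟩ := near_geom (b ^ 2) (a ^ 2) (by positivity) hab.symm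
  set c := min ca cb with hcdef
  have hc : 0 < c := lt_min hca hcb
  obtain ⟨Ca, hCa, na⟩ := near_bound a b ν s (s₁ - s) c La hc hLa ht2
  obtain ⟨Cb, hCb, nb⟩ := near_bound b a ν s (s₁ - s) c Lb hc hLb ht2
  have hF : Summable (fun n : ℤ => |(n : ℝ)| ^ (-(4 * s))) :=
    Real.summable_abs_int_rpow (by linarith)
  set F := ∑' n : ℤ, |(n : ℝ)| ^ (-(4 * s)) with hFdef
  have hF0 : 0 ≤ F := tsum_nonneg fun n => by positivity
  refine ⟨4 / c ^ 4 * F + Ca * (Sa + Sa) + Cb * (Sb + Sb), by positivity, fun k => ?_⟩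
  set W := jb (k : ℝ) ^ (2 + 2 * s₁ - 2 * s) with hW
  have hWu : W = (1 + (k : ℝ) ^ 2) ^ (1 + (s₁ - s)) := by
    rw [hW, jb_rpow]; congr 1; ring
  have hW0 : 0 < W := by rw [hWu]; positivity
  set T : ℤ → ℝ := fun k₁ : ℤ => if 0 < k₁ then
    jb (k₁ : ℝ) ^ (4 - 4 * s) /
      (((k₁ : ℝ) - a * (k : ℝ))^2 * ((k₁ : ℝ) - b * (k : ℝ))^2
        * ((k₁ : ℝ) + a * (k : ℝ))^2 * ((k₁ : ℝ) + b * (k : ℝ))^2)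
  else 0 with hT
  -- the majorant
  set w := (1 + (k : ℝ) ^ 2) ^ (-1 - ν) with hw
  have hw0 : 0 ≤ w := by positivity
  have plus : ∀ (d S : ℝ), (∀ k : ℤ,
      Summable (fun n : ℤ => (1 + (k : ℝ) ^ 2) ^ (-1 - ν) * (1 / ((n : ℝ) - d * k) ^ 2)) ∧
      ∑' n : ℤ, (1 + (k : ℝ) ^ 2) ^ (-1 - ν) * (1 / ((n : ℝ) - d * k) ^ 2) ≤ S) →
      Summable (fun n : ℤ => w * (1 / ((n : ℝ) - d * k) ^ 2) +
        w * (1 / ((n : ℝ) + d * k) ^ 2)) ∧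
      ∑' n : ℤ, (w * (1 / ((n : ℝ) - d * k) ^ 2) +
        w * (1 / ((n : ℝ) + d * k) ^ 2)) ≤ S + S := by
    intro d S h
    have p := h k
    have q := h (-k)
    simp only [Int.cast_neg, neg_sq, mul_neg, sub_neg_eq_add] at q
    refine ⟨p.1.add q.1, ?_⟩
    rw [p.1.tsum_add q.1]
    exact add_le_add p.2 q.2
  have pa := plus a Sa hsa
  have pb := plus b Sb hsb
  set ga' : ℤ → ℝ := fun n : ℤ => w * (1 / ((n : ℝ) - a * k) ^ 2) +
        w * (1 / ((n : ℝ) + a * k) ^ 2) with hga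
  set gb' : ℤ → ℝ := fun n : ℤ => w * (1 / ((n : ℝ) - b * k) ^ 2) +
        w * (1 / ((n : ℝ) + b * k) ^ 2) with hgb
  have ga0 : ∀ n, 0 ≤ ga' n := fun n => by simp only [hga]; positivity
  have gb0 : ∀ n, 0 ≤ gb' n := fun n => by simp only [hgb]; positivity
  have hH := ((hF.hasSum.mul_left (4 / c ^ 4)).add (pa.1.hasSum.mul_left Ca)).add
    (pb.1.hasSum.mul_left Cb)
  have T0 : ∀ n, 0 ≤ T n := by
    intro n
    simp only [hT]
    split_ifs
    · have : 0 ≤ jb (n : ℝ) := Real.sqrt_nonneg _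
      positivity
    · exact le_rfl
  have hle : ∀ n : ℤ, W * T n ≤
      4 / c ^ 4 * |(n : ℝ)| ^ (-(4 * s)) + Ca * ga' n + Cb * gb' n := by
    intro n
    have f0 : 0 ≤ 4 / c ^ 4 * |(n : ℝ)| ^ (-(4 * s)) := by positivity
    have fa : 0 ≤ Ca * ga' n := mul_nonneg hCa.le (ga0 n)
    have fb : 0 ≤ Cb * gb' n := mul_nonneg hCb.le (gb0 n)
    by_cases hn : 0 < n
    · have hn1 : (1 : ℝ) ≤ (n : ℝ) ^ 2 := by
        have : (1 : ℝ) ≤ n := by exact_mod_cast hn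
        nlinarith
      have hTn : W * T n = (1 + (k : ℝ) ^ 2) ^ (1 + (s₁ - s)) *
          ((1 + (n : ℝ) ^ 2) ^ (2 - 2 * s) /
        (((n : ℝ) - a * k) ^ 2 * (n - b * k) ^ 2 * (n + a * k) ^ 2 * (n + b * k) ^ 2)) := by
        simp only [hT, if_pos hn]
        rw [hWu, jb_rpow]
        congr 3; ring
      rw [hTn]
      by_cases h1 : |(n : ℝ) ^ 2 - a ^ 2 * (k : ℝ) ^ 2| < c * ((n : ℝ) ^ 2 + (k : ℝ) ^ 2)
      · obtain ⟨r1, r2, r3⟩ := ga c hc (min_le_left _ _) _ _ (by positivity) (by positivity) h1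
        have := na n k hn1 r2 r3 r1
        simp only [hga, hw] at *
        linarith
      · by_cases h2 : |(n : ℝ) ^ 2 - b ^ 2 * (k : ℝ) ^ 2| < c * ((n : ℝ) ^ 2 + (k : ℝ) ^ 2)
        · obtain ⟨r1, r2, r3⟩ := gb c hc (min_le_right _ _) _ _ (by positivity) (by positivity) h2
          have := nb n k hn1 r2 r3 r1
          have e : ((n : ℝ) - b * k) ^ 2 * (n - a * k) ^ 2 * (n + b * k) ^ 2 * (n + a * k) ^ 2 =
            ((n : ℝ) - a * k) ^ 2 * (n - b * k) ^ 2 * (n + a * k) ^ 2 * (n + b * k) ^ 2 := by ring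
          rw [e] at this
          simp only [hgb, hw] at *
          linarith
        · have := far_bound a b s (s₁ - s) c hc ht1 hs n k hn1 (not_lt.mp h1) (not_lt.mp h2)
          linarith
    · have : T n = 0 := by simp only [hT, if_neg hn]
      rw [this, mul_zero]
      linarith
  have hWT : Summable (fun n => W * T n) :=
    Summable.of_nonneg_of_le (fun n => mul_nonneg hW0.le (T0 n)) hle hH.summable
  have hTs : Summable T := (summable_mul_left_iff hW0.ne').mp hWT
  refine ⟨hTs, ?_⟩
  rw [← tsum_mul_left]
  refine (hasSum_le hle hWT.hasSum hH).trans ?_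
  have := mul_le_mul_of_nonneg_left pa.2 hCa.le
  have := mul_le_mul_of_nonneg_left pb.2 hCb.le
  linarith
end
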